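/- arXiv:2003.00246 — 9 statements merged into one kernel-verified Lean document; each statement's English description precedes it below -/
import Mathlib

section
/- Let p_d > 0, θ ∈ (0,1), β_k > 0, β_e > 0, κ > 0, σ² ∈ (0,1), σ_q² ≥ 0, T' > 0 be real numbers. Define B₁ = π·T'·( 2θ β_k p_d/π + 2(1−θ)β_k p_d/π + β_k σ_q² p_d + 1 ) and B₂ = π·T'·( 2(1−θ)β_e p_d/π + β_e p_d σ_q² + 1 ). Then, as the natural number N tends to infinity, the quantity log₂(1 + 2θ β_k σ⁴ p_d N/B₁) − log₂(1 + 2θ β_e p_d σ² (κ σ² N + 1)/B₂) converges to log₂( β_k (p_d β_e (2−2θ+π σ_q²) + π) / ( κ β_e (p_d β_k (π σ_q²+2) + π) ) ). -/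
open Filter

lemma aux_lim (a b c : ℝ) (ha : 0 < a) (hb : 0 < b) (hc : 0 < c) :
    Tendsto (fun N : ℕ => Real.logb 2 (1 + a * (N:ℝ)) - Real.logb 2 (1 + (b * (N:ℝ) + c)))
      atTop (nhds (Real.logb 2 (a / b))) := by
  have hinv : Tendsto (fun N : ℕ => ((N:ℝ))⁻¹) atTop (nhds 0) :=
    tendsto_inv_atTop_nhds_zero_nat
  have h1 : Tendsto (fun N : ℕ => ((N:ℝ)⁻¹ + a) / ((1 + c) * (N:ℝ)⁻¹ + b)) atTop
      (nhds ((0 + a) / ((1 + c) * 0 + b))) :=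
    (hinv.add_const a).div ((hinv.const_mul (1 + c)).add_const b) (by simpa using hb.ne')
  rw [mul_zero, zero_add, zero_add] at h1
  have h2 : Tendsto (fun N : ℕ => Real.logb 2 (((N:ℝ)⁻¹ + a) / ((1 + c) * (N:ℝ)⁻¹ + b))) atTop
      (nhds (Real.logb 2 (a / b))) := by
    have := (h1.log (div_pos ha hb).ne').div_const (Real.log 2)
    exact this
  refine h2.congr' ?_
  filter_upwards [eventually_gt_atTop 0] with N hN
  have hN' : (0:ℝ) < N := by exact_mod_cast hN
  rw [← Real.logb_div (by positivity) (by positivity)]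
  congr 1
  field_simp
  ring

/-- N → ∞ limit of the MRT-BF secrecy-rate lower bound with
random artificial noise (R-AN), equation (54), before taking the positive part. -/
theorem stmt_2 (pd θ βk βe κ σ2 σq2 T' : ℝ)
    (hpd : 0 < pd) (hθ : θ ∈ Set.Ioo (0:ℝ) 1) (hβk : 0 < βk) (hβe : 0 < βe)
    (hκ : 0 < κ) (hσ : σ2 ∈ Set.Ioo (0:ℝ) 1) (hσq : 0 ≤ σq2) (hT' : 0 < T') :
    Tendsto (fun N : ℕ =>
      Real.logb 2 (1 + 2 * θ * βk * σ2 ^ 2 * pd * (N : ℝ) /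
        (Real.pi * T' * (2 * θ * βk * pd / Real.pi
          + 2 * (1 - θ) * βk * pd / Real.pi + βk * σq2 * pd + 1)))
      - Real.logb 2 (1 + 2 * θ * βe * pd * σ2 * (κ * σ2 * (N : ℝ) + 1) /
        (Real.pi * T' * (2 * (1 - θ) * βe * pd / Real.pi + βe * pd * σq2 + 1))))
      atTop
      (nhds (Real.logb 2 (βk * (pd * βe * (2 - 2 * θ + Real.pi * σq2) + Real.pi) /
        (κ * βe * (pd * βk * (Real.pi * σq2 + 2) + Real.pi))))) := by
  obtain ⟨hθ0, hθ1⟩ := hθ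
  obtain ⟨hσ0, hσ1⟩ := hσ
  have hpi := Real.pi_pos
  have hθ' : 0 < 1 - θ := by linarith
  have e1 : Real.pi * T' * (2 * θ * βk * pd / Real.pi
          + 2 * (1 - θ) * βk * pd / Real.pi + βk * σq2 * pd + 1)
      = T' * (pd * βk * (Real.pi * σq2 + 2) + Real.pi) := by
    field_simp
    ring
  have e2 : Real.pi * T' * (2 * (1 - θ) * βe * pd / Real.pi + βe * pd * σq2 + 1)
      = T' * (pd * βe * (2 - 2 * θ + Real.pi * σq2) + Real.pi) := by
    field_simp
  have p1 : 0 < pd * βk * (Real.pi * σq2 + 2) + Real.pi := by positivity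
  have p2 : 0 < pd * βe * (2 - 2 * θ + Real.pi * σq2) + Real.pi := by
    have : 0 < 2 - 2 * θ := by linarith
    positivity
  rw [e1, e2]
  generalize pd * βk * (Real.pi * σq2 + 2) + Real.pi = X at *
  generalize pd * βe * (2 - 2 * θ + Real.pi * σq2) + Real.pi = Y at *
  have key := aux_lim (2 * θ * βk * σ2 ^ 2 * pd / (T' * X))
    (2 * θ * βe * pd * σ2 * (κ * σ2) / (T' * Y)) (2 * θ * βe * pd * σ2 / (T' * Y))
    (by positivity) (by positivity) (by positivity)
  convert key using 2
  · rename_i N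
    congr 2 <;> ring
  · congr 1
    field_simp
end

section
/- Let p_d > 0, β_k > 0, β_e > 0, κ > 0, σ² ∈ (0,1), σ_q² ≥ 0 be real numbers with β_e ≥ σ² β_k. Then the function f : (0,1) → ℝ given by f(θ) = log₂( β_k (p_d β_e (2−2θ+π σ_q²) + π) / ( κ β_e (p_d β_k (2−2θσ²+π σ_q²) + π) ) ) is strictly decreasing on (0,1), and its supremum over θ ∈ (0,1) equals log₂( β_k (p_d β_e (π σ_q²+2) + π) / ( κ β_e (p_d β_k (π σ_q²+2) + π) ) ). -/
open Filter

/-- the asymptotic ZF-BF / R-AN secrecy-rate function f₁(θ) is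
strictly decreasing on (0,1) (under the sufficient hypothesis β_e ≥ σ²β_k),
with its supremum given by equation (49). -/
theorem stmt_6 (pd βk βe κ σ2 σq2 : ℝ)
    (hpd : 0 < pd) (hβk : 0 < βk) (hβe : 0 < βe) (hκ : 0 < κ)
    (hσ : σ2 ∈ Set.Ioo (0:ℝ) 1) (hσq : 0 ≤ σq2) (hdom : σ2 * βk ≤ βe) :
    StrictAntiOn (fun θ : ℝ =>
        Real.logb 2 (βk * (pd * βe * (2 - 2 * θ + Real.pi * σq2) + Real.pi) /
          (κ * βe * (pd * βk * (2 - 2 * θ * σ2 + Real.pi * σq2) + Real.pi))))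
      (Set.Ioo 0 1) ∧
    sSup ((fun θ : ℝ =>
        Real.logb 2 (βk * (pd * βe * (2 - 2 * θ + Real.pi * σq2) + Real.pi) /
          (κ * βe * (pd * βk * (2 - 2 * θ * σ2 + Real.pi * σq2) + Real.pi)))) '' Set.Ioo 0 1)
      = Real.logb 2 (βk * (pd * βe * (Real.pi * σq2 + 2) + Real.pi) /
          (κ * βe * (pd * βk * (Real.pi * σq2 + 2) + Real.pi))) := by
  have hpi := Real.pi_pos
  obtain ⟨hs0, hs1⟩ := hσ
  have hq : 0 ≤ Real.pi * σq2 := by positivity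
  set q := Real.pi * σq2 with hqdef
  have hA : ∀ θ ∈ Set.Ico (0:ℝ) 1, 0 < pd * βe * (2 - 2 * θ + q) + Real.pi := by
    intro θ hθ
    have : 0 ≤ 2 - 2 * θ + q := by linarith [hθ.2]
    positivity
  have hD : ∀ θ ∈ Set.Ico (0:ℝ) 1, 0 < pd * βk * (2 - 2 * θ * σ2 + q) + Real.pi := by
    intro θ hθ
    have : 0 ≤ 2 - 2 * θ * σ2 + q := by nlinarith [hθ.1, hθ.2]
    positivity
  have key : StrictAntiOn (fun θ : ℝ =>
        Real.logb 2 (βk * (pd * βe * (2 - 2 * θ + q) + Real.pi) /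
          (κ * βe * (pd * βk * (2 - 2 * θ * σ2 + q) + Real.pi))))
      (Set.Ico 0 1) := by
    intro x hx y hy hxy
    have hAx := hA x hx
    have hAy := hA y hy
    have hDx := hD x hx
    have hDy := hD y hy
    apply Real.logb_lt_logb (by norm_num) (by positivity)
    rw [div_lt_div_iff₀ (by positivity) (by positivity)]
    have h1 : 0 < 2 * (y - x) * pd *
        (pd * βe * βk * (2 + q) * (1 - σ2) + Real.pi * (βe - σ2 * βk)) := by
      have h2 : 0 < y - x := by linarith
      have h3 : 0 < 1 - σ2 := by linarith
      have h4 : 0 ≤ βe - σ2 * βk := by linarith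
      positivity
    have h5 : 0 < (βk * κ * βe) * (2 * (y - x) * pd *
        (pd * βe * βk * (2 + q) * (1 - σ2) + Real.pi * (βe - σ2 * βk))) := by
      positivity
    linarith
  have h00 : (0:ℝ) ∈ Set.Ico (0:ℝ) 1 := by simp
  refine ⟨key.mono Set.Ioo_subset_Ico_self, ?_⟩
  have hF0 : Real.logb 2 (βk * (pd * βe * (q + 2) + Real.pi) /
          (κ * βe * (pd * βk * (q + 2) + Real.pi))) = (fun θ : ℝ =>
        Real.logb 2 (βk * (pd * βe * (2 - 2 * θ + q) + Real.pi) /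
          (κ * βe * (pd * βk * (2 - 2 * θ * σ2 + q) + Real.pi)))) 0 := by
    simp [add_comm]
  have hcont : ContinuousAt (fun θ : ℝ =>
        Real.logb 2 (βk * (pd * βe * (2 - 2 * θ + q) + Real.pi) /
          (κ * βe * (pd * βk * (2 - 2 * θ * σ2 + q) + Real.pi)))) 0 := by
    have hA0 := hA 0 h00
    have hD0 := hD 0 h00
    unfold Real.logb
    refine ContinuousAt.div_const (ContinuousAt.log (ContinuousAt.div (by fun_prop) (by fun_prop)
      ?_) ?_) _
    · exact (mul_pos (mul_pos hκ hβe) hD0).ne'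
    · exact (div_pos (mul_pos hβk hA0) (mul_pos (mul_pos hκ hβe) hD0)).ne'
  rw [hF0]
  generalize (fun θ : ℝ =>
        Real.logb 2 (βk * (pd * βe * (2 - 2 * θ + q) + Real.pi) /
          (κ * βe * (pd * βk * (2 - 2 * θ * σ2 + q) + Real.pi)))) = F at key hcont
  apply csSup_eq_of_forall_le_of_forall_lt_exists_gt
  · exact (Set.nonempty_Ioo.2 one_pos).image _
  · rintro _ ⟨θ, hθ, rfl⟩
    exact (key h00 (Set.Ioo_subset_Ico_self hθ) hθ.1).le
  · intro w hw
    have h1 : ∀ᶠ θ in nhdsWithin (0:ℝ) (Set.Ioi 0), w < F θ :=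
      (hcont.eventually (lt_mem_nhds hw)).filter_mono nhdsWithin_le_nhds
    have h2 : ∀ᶠ θ in nhdsWithin (0:ℝ) (Set.Ioi 0), θ ∈ Set.Ioo (0:ℝ) 1 :=
      Ioo_mem_nhdsGT one_pos
    obtain ⟨θ, hθ1, hθ2⟩ := (h1.and h2).exists
    exact ⟨_, ⟨θ, hθ2, rfl⟩, hθ1⟩
end

section
/- Let p_d > 0, β_k > 0, β_e > 0, κ > 0, σ² ∈ (0,1) with κσ² < 1, σ_q² ≥ 0 be real numbers, and set c = π σ_q² + 2. Define V_R = β_k (p_d β_e c + π) / ( κ β_e (p_d β_k c + π) ) and V_NS = β_k (p_d β_e (c − 2κσ²) + π) / ( κ β_e (p_d β_k (c − 2σ²) + π) ). Then the following are equivalent: (i) V_R > 1; (ii) V_NS > 1; (iii) κ < β_k (p_d β_e c + π) / ( β_e (p_d β_k c + π) ). -/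
/-- positivity of the asymptotic maximum secrecy rates of
Corollary 1 (equations (49) and (50)) is simultaneous for R-AN and NS-AN,
and equivalent to a threshold on the received-power ratio κ. -/
theorem stmt_7 (pd βk βe κ σ2 σq2 c VR VNS : ℝ)
    (hpd : 0 < pd) (hβk : 0 < βk) (hβe : 0 < βe) (hκ : 0 < κ)
    (hσ : σ2 ∈ Set.Ioo (0:ℝ) 1) (hκσ : κ * σ2 < 1) (hσq : 0 ≤ σq2)
    (hc : c = Real.pi * σq2 + 2)
    (hVR : VR = βk * (pd * βe * c + Real.pi) / (κ * βe * (pd * βk * c + Real.pi)))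
    (hVNS : VNS = βk * (pd * βe * (c - 2 * κ * σ2) + Real.pi) /
      (κ * βe * (pd * βk * (c - 2 * σ2) + Real.pi))) :
    List.TFAE [VR > 1, VNS > 1,
      κ < βk * (pd * βe * c + Real.pi) / (βe * (pd * βk * c + Real.pi))] := by
  obtain ⟨hσ0, hσ1⟩ := hσ
  have hpi := Real.pi_pos
  have hc2 : 2 ≤ c := by
    rw [hc]
    linarith [mul_nonneg hpi.le hσq]
  have hc0 : 0 < c := by linarith
  have hcs : 0 < c - 2 * σ2 := by linarith
  have hD : 0 < pd * βk * c + Real.pi := by positivity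
  have hDN : 0 < pd * βk * (c - 2 * σ2) + Real.pi := by positivity
  have e1 : VR > 1 ↔ κ * βe * (pd * βk * c + Real.pi) < βk * (pd * βe * c + Real.pi) := by
    rw [hVR, gt_iff_lt, one_lt_div (by positivity)]
  have e2 : VNS > 1 ↔ κ * βe * (pd * βk * c + Real.pi) < βk * (pd * βe * c + Real.pi) := by
    rw [hVNS, gt_iff_lt, one_lt_div (by positivity)]
    constructor <;> intro h <;> linarith
  have e3 : κ < βk * (pd * βe * c + Real.pi) / (βe * (pd * βk * c + Real.pi)) ↔
      κ * βe * (pd * βk * c + Real.pi) < βk * (pd * βe * c + Real.pi) := by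
    rw [lt_div_iff₀ (by positivity), mul_assoc κ βe]
  tfae_have 1 ↔ 2 := e1.trans e2.symm
  tfae_have 1 ↔ 3 := e1.trans e3.symm
  tfae_finish
end

section
/- Let p_d > 0, β_k > 0, β_e > 0, κ > 0, σ² ∈ (0,1) with κσ² < 1, σ_q² ≥ 0 be real numbers, and set c = π σ_q² + 2. Define V_R = β_k (p_d β_e c + π) / ( κ β_e (p_d β_k c + π) ) and V_NS = β_k (p_d β_e (c − 2κσ²) + π) / ( κ β_e (p_d β_k (c − 2σ²) + π) ). If V_R > 1, then V_NS > V_R; consequently log₂ V_NS − log₂ V_R > 0. -/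
/-- equation (52): whenever the asymptotic secrecy rate without
power scaling is positive, NS-AN strictly outperforms R-AN asymptotically. -/
theorem stmt_8 (pd βk βe κ σ2 σq2 c VR VNS : ℝ)
    (hpd : 0 < pd) (hβk : 0 < βk) (hβe : 0 < βe) (hκ : 0 < κ)
    (hσ : σ2 ∈ Set.Ioo (0:ℝ) 1) (hκσ : κ * σ2 < 1) (hσq : 0 ≤ σq2)
    (hc : c = Real.pi * σq2 + 2)
    (hVR : VR = βk * (pd * βe * c + Real.pi) / (κ * βe * (pd * βk * c + Real.pi)))
    (hVNS : VNS = βk * (pd * βe * (c - 2 * κ * σ2) + Real.pi) /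
      (κ * βe * (pd * βk * (c - 2 * σ2) + Real.pi)))
    (hpos : VR > 1) :
    VNS > VR ∧ Real.logb 2 VNS - Real.logb 2 VR > 0 := by
  obtain ⟨hσ0, hσ1⟩ := hσ
  have hπ := Real.pi_pos
  have hc2 : 2 ≤ c := by
    have := mul_nonneg hπ.le hσq
    linarith
  have hB : 0 < pd * βk * c + Real.pi := by positivity
  have hd : 0 < c - 2 * σ2 := by linarith
  have hD : 0 < pd * βk * (c - 2 * σ2) + Real.pi := by positivity
  have h1 : κ * βe * (pd * βk * c + Real.pi) < βk * (pd * βe * c + Real.pi) := by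
    rw [hVR, gt_iff_lt, one_lt_div (by positivity)] at hpos
    exact hpos
  have h2 : VNS > VR := by
    rw [hVR, hVNS, gt_iff_lt, div_lt_div_iff₀ (by positivity) (by positivity)]
    have h3 : 0 < (2 * σ2 * pd * (βk * κ * βe)) *
        (βk * (pd * βe * c + Real.pi) - κ * βe * (pd * βk * c + Real.pi)) :=
      mul_pos (by positivity) (by linarith)
    linear_combination h3
  refine ⟨h2, ?_⟩
  have h4 := Real.logb_lt_logb (b := 2) (by norm_num) (by linarith : 0 < VR) h2
  linarith
end

section
/- Let ρ > 0, θ ∈ (0,1), β_k > 0, β_e > 0, κ > 0, σ² ∈ (0,1), σ_q² ≥ 0, T > 0, a_k ≥ 0, a_e ≥ 0 be real numbers and K ≥ 1 a natural number. For each natural number N ≥ 1, set p(N) = ρ/√N, A₁(N) = π·T·( a_k p(N) + (2θ β_k p(N)/π)(1−σ²) + β_k σ_q² p(N) + 1 ) and A₂(N) = π·T·( a_e p(N) + β_e p(N) σ_q² + 1 ). Then, as N tends to infinity, the quantity log₂(1 + 2θ β_k p(N) (N−K)/A₁(N)) − log₂(1 + 2θ β_e p(N) (κ(N−K−1) + 1/σ²)/A₂(N))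 converges to log₂( β_k / (κ β_e) ). -/
open Filter

/-- Corollary 2, ZF-BF: under the 1/√N power-scaling regime the
secrecy-rate lower bound converges to log₂(β_k/(κβ_e)), irrespective of the
artificial-noise scheme (parameterized by the leakage constants a_k, a_e). -/
theorem stmt_9 (ρ θ βk βe κ σ2 σq2 T ak ae : ℝ) (K : ℕ)
    (hρ : 0 < ρ) (hθ : θ ∈ Set.Ioo (0:ℝ) 1) (hβk : 0 < βk) (hβe : 0 < βe)
    (hκ : 0 < κ) (hσ : σ2 ∈ Set.Ioo (0:ℝ) 1) (hσq : 0 ≤ σq2) (hT : 0 < T)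
    (hak : 0 ≤ ak) (hae : 0 ≤ ae) (hK : 1 ≤ K) :
    Tendsto (fun N : ℕ =>
      Real.logb 2 (1 + 2 * θ * βk * (ρ / Real.sqrt N) * ((N : ℝ) - K) /
        (Real.pi * T * (ak * (ρ / Real.sqrt N)
          + (2 * θ * βk * (ρ / Real.sqrt N) / Real.pi) * (1 - σ2)
          + βk * σq2 * (ρ / Real.sqrt N) + 1)))
      - Real.logb 2 (1 + 2 * θ * βe * (ρ / Real.sqrt N) *
          (κ * ((N : ℝ) - K - 1) + 1 / σ2) /
        (Real.pi * T * (ae * (ρ / Real.sqrt N)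
          + βe * (ρ / Real.sqrt N) * σq2 + 1))))
      atTop (nhds (Real.logb 2 (βk / (κ * βe)))) := by
  obtain ⟨hθ0, hθ1⟩ := hθ
  obtain ⟨hσ0, hσ1⟩ := hσ
  have hpi := Real.pi_pos
  set F : ℝ → ℝ := fun u => u + 2 * θ * βk * ρ * (1 - K * u ^ 2) /
    (Real.pi * T * (ak * (ρ * u) + (2 * θ * βk * (ρ * u) / Real.pi) * (1 - σ2)
      + βk * σq2 * (ρ * u) + 1)) with hF
  set G : ℝ → ℝ := fun u => u + 2 * θ * βe * ρ * (κ * (1 - K * u ^ 2 - u ^ 2) + u ^ 2 / σ2) /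
    (Real.pi * T * (ae * (ρ * u) + βe * (ρ * u) * σq2 + 1)) with hG
  have hu : Tendsto (fun N : ℕ => (Real.sqrt N)⁻¹) atTop (nhds 0) :=
    tendsto_inv_atTop_zero.comp (Real.tendsto_sqrt_atTop.comp tendsto_natCast_atTop_atTop)
  have hFc : ContinuousAt F 0 := by
    refine ContinuousAt.add (by fun_prop) (ContinuousAt.div (by fun_prop) (by fun_prop) ?_)
    simp [hpi.ne', hT.ne']
  have hGc : ContinuousAt G 0 := by
    refine ContinuousAt.add (by fun_prop) (ContinuousAt.div (by fun_prop) (by fun_prop) ?_)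
    simp [hpi.ne', hT.ne']
  have hF0 : F 0 = 2 * θ * βk * ρ / (Real.pi * T) := by simp [hF]
  have hG0 : G 0 = 2 * θ * βe * ρ * κ / (Real.pi * T) := by simp [hG]
  have hF0p : F 0 ≠ 0 := by rw [hF0]; positivity
  have hG0p : G 0 ≠ 0 := by rw [hG0]; positivity
  have hFt := hFc.tendsto.comp hu
  have hGt := hGc.tendsto.comp hu
  have hlim : Real.logb 2 (βk / (κ * βe)) = Real.logb 2 (F 0) - Real.logb 2 (G 0) := by
    rw [← Real.logb_div hF0p hG0p, hF0, hG0]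
    congr 1
    field_simp
  rw [hlim]
  have hlF : Tendsto (fun N : ℕ => Real.logb 2 (F (Real.sqrt N)⁻¹)) atTop
      (nhds (Real.logb 2 (F 0))) := (hFt.log hF0p).div_const _
  have hlG : Tendsto (fun N : ℕ => Real.logb 2 (G (Real.sqrt N)⁻¹)) atTop
      (nhds (Real.logb 2 (G 0))) := (hGt.log hG0p).div_const _
  refine (hlF.sub hlG).congr' ?_
  filter_upwards [hFt.eventually_ne hF0p, hGt.eventually_ne hG0p, eventually_gt_atTop 0]
    with N h1 h2 hN
  have hs : 0 < Real.sqrt N := Real.sqrt_pos.2 (by exact_mod_cast hN)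
  have hsq : (N : ℝ) = Real.sqrt N ^ 2 := (Real.sq_sqrt (by positivity)).symm
  simp only [Function.comp] at h1 h2
  have key : ∀ c D : ℝ, ∀ X : ℝ, 1 + c * (ρ / Real.sqrt N) * X / D
      = Real.sqrt N * ((Real.sqrt N)⁻¹ + c * ρ * (X * ((Real.sqrt N)⁻¹) ^ 2) / D) := by
    intro c D X
    rw [mul_add, mul_inv_cancel₀ hs.ne']
    congr 1
    rw [div_eq_mul_inv, div_eq_mul_inv, div_eq_mul_inv]
    field_simp
  have hN1 : (N : ℝ) * ((Real.sqrt N)⁻¹) ^ 2 = 1 := by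
    rw [inv_pow, ← hsq]; exact mul_inv_cancel₀ (by positivity)
  rw [key, key]
  have e1 : ((N : ℝ) - K) * ((Real.sqrt N)⁻¹) ^ 2 = 1 - K * ((Real.sqrt N)⁻¹) ^ 2 := by
    linear_combination hN1
  have e2 : (κ * ((N : ℝ) - K - 1) + 1 / σ2) * ((Real.sqrt N)⁻¹) ^ 2
      = κ * (1 - K * ((Real.sqrt N)⁻¹) ^ 2 - ((Real.sqrt N)⁻¹) ^ 2)
        + ((Real.sqrt N)⁻¹) ^ 2 / σ2 := by
    linear_combination κ * hN1
  rw [e1, e2, div_eq_mul_inv ρ]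
  change _ = Real.logb 2 (Real.sqrt N * F (Real.sqrt N)⁻¹)
    - Real.logb 2 (Real.sqrt N * G (Real.sqrt N)⁻¹)
  rw [Real.logb_mul hs.ne' h1, Real.logb_mul hs.ne' h2]
  ring
end

section
/- Let ρ > 0, θ ∈ (0,1), β_k > 0, β_e > 0, κ > 0, σ² ∈ (0,1), σ_q² ≥ 0, T' > 0, a_k ≥ 0, a_e ≥ 0 be real numbers. For each natural number N ≥ 1, set p(N) = ρ/√N, B₁(N) = π·T'·( 2θ β_k p(N)/π + a_k p(N) + β_k σ_q² p(N) + 1 ) and B₂(N) = π·T'·( a_e p(N) + β_e p(N) σ_q² + 1 ). Then, as N tends to infinity, the quantity log₂(1 + 2θ β_k σ⁴ p(N) N/B₁(N)) − log₂(1 + 2θ β_e p(N) σ² (κ σ² N + 1)/B₂(N)) converges to log₂( β_k / (κ β_e) ). -/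
open Filter

/-- Corollary 2, MRT-BF: under the 1/√N power-scaling regime the
secrecy-rate lower bound converges to log₂(β_k/(κβ_e)), irrespective of the
artificial-noise scheme (parameterized by the leakage constants a_k, a_e). -/
theorem stmt_10 (ρ θ βk βe κ σ2 σq2 T' ak ae : ℝ)
    (hρ : 0 < ρ) (hθ : θ ∈ Set.Ioo (0:ℝ) 1) (hβk : 0 < βk) (hβe : 0 < βe)
    (hκ : 0 < κ) (hσ : σ2 ∈ Set.Ioo (0:ℝ) 1) (hσq : 0 ≤ σq2) (hT' : 0 < T')
    (hak : 0 ≤ ak) (hae : 0 ≤ ae) :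
    Tendsto (fun N : ℕ =>
      Real.logb 2 (1 + 2 * θ * βk * σ2 ^ 2 * (ρ / Real.sqrt N) * (N : ℝ) /
        (Real.pi * T' * (2 * θ * βk * (ρ / Real.sqrt N) / Real.pi
          + ak * (ρ / Real.sqrt N) + βk * σq2 * (ρ / Real.sqrt N) + 1)))
      - Real.logb 2 (1 + 2 * θ * βe * (ρ / Real.sqrt N) * σ2 *
          (κ * σ2 * (N : ℝ) + 1) /
        (Real.pi * T' * (ae * (ρ / Real.sqrt N)
          + βe * (ρ / Real.sqrt N) * σq2 + 1))))
      atTop (nhds (Real.logb 2 (βk / (κ * βe)))) := by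
  obtain ⟨hθ0, hθ1⟩ := hθ
  obtain ⟨hs0, hs1⟩ := hσ
  have hpi := Real.pi_pos
  have hu : Tendsto (fun N : ℕ => (Real.sqrt (N : ℝ))⁻¹) atTop (nhds 0) :=
    tendsto_inv_atTop_zero.comp (Real.tendsto_sqrt_atTop.comp tendsto_natCast_atTop_atTop)
  let D1 : ℝ → ℝ := fun u => Real.pi * T' * (2 * θ * βk * (ρ * u) / Real.pi
          + ak * (ρ * u) + βk * σq2 * (ρ * u) + 1)
  let D2 : ℝ → ℝ := fun u => Real.pi * T' * (ae * (ρ * u) + βe * (ρ * u) * σq2 + 1)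
  have hD1 : ∀ u, 0 ≤ u → 0 < D1 u := by
    intro u hu; simp only [D1]; positivity
  have hD2 : ∀ u, 0 ≤ u → 0 < D2 u := by
    intro u hu; simp only [D2]; positivity
  let G1 : ℝ → ℝ := fun u => u + 2 * θ * βk * σ2 ^ 2 * ρ / D1 u
  let G2 : ℝ → ℝ := fun u => u + 2 * θ * βe * ρ * σ2 * (κ * σ2 + u ^ 2) / D2 u
  have hG1 : ∀ u, 0 ≤ u → 0 < G1 u := by
    intro u hu; have := hD1 u hu; simp only [G1]; positivity
  have hG2 : ∀ u, 0 ≤ u → 0 < G2 u := by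
    intro u hu; have := hD2 u hu; simp only [G2]; positivity
  have cD1 : ContinuousAt D1 0 := by
    have : Continuous D1 := by simp only [D1]; fun_prop
    exact this.continuousAt
  have cD2 : ContinuousAt D2 0 := by
    have : Continuous D2 := by simp only [D2]; fun_prop
    exact this.continuousAt
  have cG1 : ContinuousAt G1 0 :=
    continuousAt_id.add (continuousAt_const.div cD1 (hD1 0 le_rfl).ne')
  have cG2 : ContinuousAt G2 0 := by
    refine continuousAt_id.add (ContinuousAt.div ?_ cD2 (hD2 0 le_rfl).ne')
    fun_prop
  have cF : ContinuousAt (fun u => Real.logb 2 (G1 u / G2 u)) 0 := by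
    have h := (cG1.div cG2 (hG2 0 le_rfl).ne').log
      (div_pos (hG1 0 le_rfl) (hG2 0 le_rfl)).ne'
    exact h.div_const (Real.log 2)
  have h0 : G1 0 / G2 0 = βk / (κ * βe) := by
    simp only [G1, G2, D1, D2]
    simp
    field_simp
  have key := cF.tendsto.comp hu
  simp only [h0] at key
  refine key.congr' ?_
  filter_upwards [eventually_gt_atTop 0] with N hN
  have hN' : (0:ℝ) < N := by exact_mod_cast hN
  have hs : 0 < Real.sqrt (N:ℝ) := Real.sqrt_pos.2 hN'
  have hsq : (N:ℝ) = Real.sqrt (N:ℝ) ^ 2 := (Real.sq_sqrt hN'.le).symm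
  simp only [Function.comp]
  generalize Real.sqrt (N:ℝ) = s at hs hsq ⊢
  rw [hsq]
  have hi : 0 ≤ s⁻¹ := by positivity
  have e1 : 1 + 2 * θ * βk * σ2 ^ 2 * (ρ / s) * s ^ 2 /
        (Real.pi * T' * (2 * θ * βk * (ρ / s) / Real.pi
          + ak * (ρ / s) + βk * σq2 * (ρ / s) + 1)) = s * G1 s⁻¹ := by
    have hd : (Real.pi * T' * (2 * θ * βk * (ρ / s) / Real.pi
          + ak * (ρ / s) + βk * σq2 * (ρ / s) + 1)) = D1 s⁻¹ := by
      simp only [D1, div_eq_mul_inv]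
    rw [hd]
    have := hD1 s⁻¹ hi
    simp only [G1]
    generalize D1 s⁻¹ = d at *
    field_simp
  have e2 : 1 + 2 * θ * βe * (ρ / s) * σ2 * (κ * σ2 * s ^ 2 + 1) /
        (Real.pi * T' * (ae * (ρ / s) + βe * (ρ / s) * σq2 + 1)) = s * G2 s⁻¹ := by
    have hd : (Real.pi * T' * (ae * (ρ / s) + βe * (ρ / s) * σq2 + 1)) = D2 s⁻¹ := by
      simp only [D2, div_eq_mul_inv]
    rw [hd]
    have := hD2 s⁻¹ hi
    simp only [G2]
    generalize D2 s⁻¹ = d at *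
    field_simp
  have p1 := hG1 _ hi
  have p2 := hG2 _ hi
  rw [e1, e2, ← Real.logb_div (by positivity) (by positivity),
    mul_div_mul_left _ _ hs.ne']
end

section
/- Let ρ > 0, θ ∈ (0,1), β_k > 0, β_e > 0, κ > 0, σ² ∈ (0,1), σ_q² ≥ 0, T' > 0, a_k ≥ 0, a_e ≥ 0 be real numbers. For each natural number N ≥ 1, set p(N) = ρ/N, B₁(N) = π·T'·( 2θ β_k p(N)/π + a_k p(N) + β_k σ_q² p(N) + 1 ) and B₂(N) = π·T'·( a_e p(N) + β_e p(N) σ_q² + 1 ). Then, as N tends to infinity, the quantity log₂(1 + 2θ β_k σ⁴ p(N) N/B₁(N)) − log₂(1 + 2θ β_e p(N) σ² (κ σ² N + 1)/B₂(N)) converges to log₂( (π T' + 2θ β_k σ⁴ ρ) / (π T' + 2θ κ β_e σ⁴ ρ) ). -/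
open Filter

/-- limit underlying Corollary 3, MRT-BF: under the 1/N
power-scaling regime the secrecy-rate lower bound converges to an explicit
limit independent of the artificial-noise scheme. -/
theorem stmt_11 (ρ θ βk βe κ σ2 σq2 T' ak ae : ℝ)
    (hρ : 0 < ρ) (hθ : θ ∈ Set.Ioo (0:ℝ) 1) (hβk : 0 < βk) (hβe : 0 < βe)
    (hκ : 0 < κ) (hσ : σ2 ∈ Set.Ioo (0:ℝ) 1) (hσq : 0 ≤ σq2) (hT' : 0 < T')
    (hak : 0 ≤ ak) (hae : 0 ≤ ae) :
    Tendsto (fun N : ℕ =>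
      Real.logb 2 (1 + 2 * θ * βk * σ2 ^ 2 * (ρ / (N : ℝ)) * (N : ℝ) /
        (Real.pi * T' * (2 * θ * βk * (ρ / (N : ℝ)) / Real.pi
          + ak * (ρ / (N : ℝ)) + βk * σq2 * (ρ / (N : ℝ)) + 1)))
      - Real.logb 2 (1 + 2 * θ * βe * (ρ / (N : ℝ)) * σ2 *
          (κ * σ2 * (N : ℝ) + 1) /
        (Real.pi * T' * (ae * (ρ / (N : ℝ)) + βe * (ρ / (N : ℝ)) * σq2 + 1))))
      atTop
      (nhds (Real.logb 2 ((Real.pi * T' + 2 * θ * βk * σ2 ^ 2 * ρ) /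
        (Real.pi * T' + 2 * θ * κ * βe * σ2 ^ 2 * ρ)))) := by
  obtain ⟨hθ0, -⟩ := hθ
  obtain ⟨hσ0, -⟩ := hσ
  have hπ := Real.pi_pos
  have hp : Tendsto (fun N : ℕ => ρ / (N : ℝ)) atTop (nhds 0) :=
    tendsto_const_div_atTop_nhds_zero_nat ρ
  have hA : 0 < Real.pi * T' + 2 * θ * βk * σ2 ^ 2 * ρ := by positivity
  have hB : 0 < Real.pi * T' + 2 * θ * κ * βe * σ2 ^ 2 * ρ := by positivity
  let F : ℝ → ℝ := fun p =>
    Real.logb 2 (1 + 2 * θ * βk * σ2 ^ 2 * ρ /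
      (Real.pi * T' * (2 * θ * βk * p / Real.pi + ak * p + βk * σq2 * p + 1)))
    - Real.logb 2 (1 + 2 * θ * βe * σ2 * (κ * σ2 * ρ + p) /
      (Real.pi * T' * (ae * p + βe * p * σq2 + 1)))
  have hF0 : F 0 = Real.logb 2 ((Real.pi * T' + 2 * θ * βk * σ2 ^ 2 * ρ) /
        (Real.pi * T' + 2 * θ * κ * βe * σ2 ^ 2 * ρ)) := by
    simp only [F]
    rw [← Real.logb_div]
    · congr 1
      simp only [mul_zero, zero_mul, zero_div, add_zero, zero_add, mul_one]
      field_simp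
    · simp only [mul_zero, zero_mul, zero_div, add_zero, zero_add, mul_one]
      positivity
    · simp only [mul_zero, zero_mul, zero_div, add_zero, zero_add, mul_one]
      positivity
  have hFc : ContinuousAt F 0 := by
    simp only [F, Real.logb]
    refine ContinuousAt.sub (ContinuousAt.div_const (ContinuousAt.log
      (continuousAt_const.add (ContinuousAt.div (by fun_prop) (by fun_prop) ?_)) ?_) _)
      (ContinuousAt.div_const (ContinuousAt.log
      (continuousAt_const.add (ContinuousAt.div (by fun_prop) (by fun_prop) ?_)) ?_) _) <;>
    · simp only [Pi.add_apply, Pi.div_apply, mul_zero, zero_mul, zero_div, add_zero, zero_add,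
        mul_one]
      positivity
  rw [← hF0]
  refine (hFc.tendsto.comp hp).congr' ?_
  filter_upwards [eventually_gt_atTop 0] with N hN
  have hN' : (N : ℝ) ≠ 0 := by positivity
  have e : ρ / (N : ℝ) * N = ρ := div_mul_cancel₀ _ hN'
  have e1 : 2 * θ * βk * σ2 ^ 2 * (ρ / (N : ℝ)) * (N : ℝ) = 2 * θ * βk * σ2 ^ 2 * ρ := by
    rw [mul_assoc, e]
  have e2 : 2 * θ * βe * (ρ / (N : ℝ)) * σ2 * (κ * σ2 * (N : ℝ) + 1)
      = 2 * θ * βe * σ2 * (κ * σ2 * ρ + ρ / (N : ℝ)) := by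
    linear_combination (2 * θ * βe * σ2 * κ * σ2) * e
  simp only [Function.comp, F]
  rw [e1, e2]
end

section
/- Let ρ > 0, θ ∈ (0,1), β_k > 0, β_e > 0, κ > 0, σ² ∈ (0,1), σ_q² ≥ 0, T > 0, a_k ≥ 0, a_e ≥ 0 be real numbers and K ≥ 1 a natural number. For each natural number N ≥ 1, set p(N) = ρ/N, A₁(N) = π·T·( a_k p(N) + (2θ β_k p(N)/π)(1−σ²) + β_k σ_q² p(N) + 1 ) and A₂(N) = π·T·( a_e p(N) + β_e p(N) σ_q² + 1 ). Then, as N tends to infinity, the quantity log₂(1 + 2θ β_k p(N) (N−K)/A₁(N)) − log₂(1 + 2θ β_e p(N) (κ(N−K−1) + 1/σ²)/A₂(N)) converges to log₂( (π T + 2θ β_k ρ) / (π T + 2θ κ β_e ρ) ). -/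
open Filter

/-- limit underlying Corollary 3, ZF-BF: under the 1/N
power-scaling regime the secrecy-rate lower bound converges to an explicit
limit independent of the artificial-noise scheme. -/
theorem stmt_12 (ρ θ βk βe κ σ2 σq2 T ak ae : ℝ) (K : ℕ)
    (hρ : 0 < ρ) (hθ : θ ∈ Set.Ioo (0:ℝ) 1) (hβk : 0 < βk) (hβe : 0 < βe)
    (hκ : 0 < κ) (hσ : σ2 ∈ Set.Ioo (0:ℝ) 1) (hσq : 0 ≤ σq2) (hT : 0 < T)
    (hak : 0 ≤ ak) (hae : 0 ≤ ae) (hK : 1 ≤ K) :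
    Tendsto (fun N : ℕ =>
      Real.logb 2 (1 + 2 * θ * βk * (ρ / (N : ℝ)) * ((N : ℝ) - K) /
        (Real.pi * T * (ak * (ρ / (N : ℝ))
          + (2 * θ * βk * (ρ / (N : ℝ)) / Real.pi) * (1 - σ2)
          + βk * σq2 * (ρ / (N : ℝ)) + 1)))
      - Real.logb 2 (1 + 2 * θ * βe * (ρ / (N : ℝ)) *
          (κ * ((N : ℝ) - K - 1) + 1 / σ2) /
        (Real.pi * T * (ae * (ρ / (N : ℝ)) + βe * (ρ / (N : ℝ)) * σq2 + 1))))
      atTop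
      (nhds (Real.logb 2 ((Real.pi * T + 2 * θ * βk * ρ) /
        (Real.pi * T + 2 * θ * κ * βe * ρ)))) := by
  obtain ⟨hθ0, hθ1⟩ := hθ
  obtain ⟨hσ0, hσ1⟩ := hσ
  have hpi := Real.pi_pos
  have hp : Tendsto (fun N : ℕ => ρ / (N : ℝ)) atTop (nhds 0) :=
    tendsto_const_div_atTop_nhds_zero_nat ρ
  -- numerator and denominator as continuous functions of the power
  have key : ∀ n d : ℝ → ℝ, Continuous n → Continuous d → 0 ≤ n 0 → 0 < d 0 →
      Tendsto (fun N : ℕ => Real.logb 2 (1 + n (ρ / (N : ℝ)) / d (ρ / (N : ℝ)))) atTop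
        (nhds (Real.logb 2 (1 + n 0 / d 0))) := by
    intro n d hn hd hn0 hd0
    have h1 := (hn.tendsto 0).comp hp
    have h2 := (hd.tendsto 0).comp hp
    have h3 := (h1.div h2 hd0.ne').const_add 1
    have hpos : 1 + n 0 / d 0 ≠ 0 := by positivity
    exact (Real.continuousAt_logb hpos).tendsto.comp h3
  have kA := key (fun p => 2 * θ * βk * (ρ - K * p))
    (fun p => Real.pi * T * (ak * p + (2 * θ * βk * p / Real.pi) * (1 - σ2)
          + βk * σq2 * p + 1)) (by fun_prop) (by fun_prop)
    (by simp only [mul_zero, sub_zero]; positivity) (by simp; positivity)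
  have kB := key (fun p => 2 * θ * βe * (κ * (ρ - K * p - p) + p * (1 / σ2)))
    (fun p => Real.pi * T * (ae * p + βe * p * σq2 + 1)) (by fun_prop) (by fun_prop)
    (by simp only [mul_zero, sub_zero, zero_mul, add_zero]; positivity) (by simp; positivity)
  have h := kA.sub kB
  have hlim : Real.logb 2 ((Real.pi * T + 2 * θ * βk * ρ) /
        (Real.pi * T + 2 * θ * κ * βe * ρ)) =
      Real.logb 2 (1 + 2 * θ * βk * (ρ - K * 0) / (Real.pi * T * (ak * 0
          + (2 * θ * βk * 0 / Real.pi) * (1 - σ2) + βk * σq2 * 0 + 1)))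
      - Real.logb 2 (1 + 2 * θ * βe * (κ * (ρ - K * 0 - 0) + 0 * (1 / σ2)) /
        (Real.pi * T * (ae * 0 + βe * 0 * σq2 + 1))) := by
    simp only [mul_zero, sub_zero, zero_mul, add_zero, zero_div, zero_add, mul_one]
    rw [← Real.logb_div (by positivity) (by positivity)]
    congr 1
    field_simp
  rw [hlim]
  refine h.congr' ?_
  filter_upwards [eventually_gt_atTop 0] with N hN
  have hN' : (N : ℝ) ≠ 0 := by positivity
  have e1 : 2 * θ * βk * (ρ - K * (ρ / (N : ℝ))) =
      2 * θ * βk * (ρ / (N : ℝ)) * ((N : ℝ) - K) := by field_simp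
  have e2 : 2 * θ * βe * (κ * (ρ - K * (ρ / (N : ℝ)) - ρ / (N : ℝ)) + ρ / (N : ℝ) * (1 / σ2)) =
      2 * θ * βe * (ρ / (N : ℝ)) * (κ * ((N : ℝ) - K - 1) + 1 / σ2) := by field_simp
  simp only [e1, e2]
end

section
/- Let K ≥ 2 be a natural number, let σ₁², …, σ_K² ∈ (0,1] be real numbers, fix an index k with σ_k² ≤ σ_j² for every j and σ_k² < σ_j² for at least one j, and set T' = Σ_{j=1}^K σ_j² and T = Σ_{j=1}^K 1/σ_j². Let ρ > 0, β_k > 0, β_e > 0, κ > 0 be real numbers with κ β_e < β_k. Then log₂( (π T + 2 β_k ρ)/(π T + 2 κ β_e ρ) ) > log₂( (π T' + 2 β_k σ_k⁴ ρ)/(π T' + 2 κ β_e σ_k⁴ ρ) ). -/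
/-- equation (64), Δ^{PS2} > 0: under the 1/N power-scaling
regime, the asymptotic maximum secrecy rate of ZF-BF strictly exceeds that of
MRT-BF when the rates are positive (κβ_e < β_k) and the intercepted user's
channel-estimate variance is minimal, strictly smaller than at least one
other user's. -/
theorem stmt_15 (K : ℕ) (hK : 2 ≤ K) (σ2 : Fin K → ℝ)
    (hσ : ∀ j, σ2 j ∈ Set.Ioc (0:ℝ) 1) (k : Fin K)
    (hmin : ∀ j, σ2 k ≤ σ2 j) (hstrict : ∃ j, σ2 k < σ2 j)
    (ρ βk βe κ : ℝ) (hρ : 0 < ρ) (hβk : 0 < βk) (hβe : 0 < βe) (hκ : 0 < κ)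
    (hdom : κ * βe < βk) :
    Real.logb 2 ((Real.pi * (∑ j, (σ2 j)⁻¹) + 2 * βk * ρ) /
        (Real.pi * (∑ j, (σ2 j)⁻¹) + 2 * κ * βe * ρ))
      > Real.logb 2 ((Real.pi * (∑ j, σ2 j) + 2 * βk * (σ2 k) ^ 2 * ρ) /
          (Real.pi * (∑ j, σ2 j) + 2 * κ * βe * (σ2 k) ^ 2 * ρ)) := by
  have hs := (hσ k).1
  have hlt : σ2 k ^ 2 * (∑ j, (σ2 j)⁻¹) < ∑ j, σ2 j := by
    rw [Finset.mul_sum]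
    refine Finset.sum_lt_sum (fun j _ => ?_) ?_
    · have hj := (hσ j).1
      rw [← div_eq_mul_inv, div_le_iff₀ hj]
      nlinarith [hmin j]
    · obtain ⟨j, h⟩ := hstrict
      refine ⟨j, Finset.mem_univ j, ?_⟩
      have hj := (hσ j).1
      rw [← div_eq_mul_inv, div_lt_iff₀ hj]
      nlinarith
  have hT : 0 ≤ ∑ j, (σ2 j)⁻¹ :=
    Finset.sum_nonneg (fun j _ => (inv_pos.mpr (hσ j).1).le)
  have hT' : 0 ≤ ∑ j, σ2 j := Finset.sum_nonneg (fun j _ => (hσ j).1.le)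
  generalize (∑ j, (σ2 j)⁻¹) = T at *
  generalize (∑ j, σ2 j) = T' at *
  have hpi := Real.pi_pos
  apply Real.logb_lt_logb (by norm_num)
  · positivity
  · rw [div_lt_div_iff₀ (by positivity) (by positivity)]
    have h := mul_pos (mul_pos hpi hρ) (mul_pos (sub_pos.mpr hdom) (sub_pos.mpr hlt))
    nlinarith [h]
end
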